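/- Let γ > 0, let t : ℤ → ℂ satisfy t_{−n} = conj(t_n) and 𝐭[g,g] ≥ γ‖g‖² for all finitely supported g : ℤ → ℂ, and let M be the finite non-negative Borel measure on 𝕋 with t_n = ∫_𝕋 z^{−n} dM(z) for all n ∈ ℤ. Then the form 𝐭[g,g] is closable in ℓ²(ℤ) if and only if there exists w ∈ L¹(𝕋, m) with w(z) ≥ γ for m-almost every z such that dM = w dm, i.e., M(X) = ∫_X w dm for all Borel sets X ⊆ 𝕋. -/

import Mathlib

/-!
Attach to a finitely supported sequence `g` the trigonometric polynomial `P_g(z) = Σ gₙ zⁿ`.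
Inserting the moment formula into the form gives `𝐭[g,g] = ∫ |P_g|² dM` (`laurentForm_eq`), and for
`M = m` this is Parseval's identity `‖g‖² = ∫ |P_g|² dm` (`l2normZ_eq`). Closability therefore says
that a sequence `P_k` which is null in `L²(m)` and Cauchy in `L²(M)` is null in `L²(M)`
(`formClosableZ_iff`).

If `M ≪ m`, this holds because the limit in `L²(M)` and the limit in `L²(m)` coincide `M`-a.e. along
a subsequence (`tendsto_zero_of_absolutelyContinuous`).

For the converse, trigonometric polynomials are dense in `L²(M + m)`, so for every Borel set `X` one
sequence `P_k` converges to `1_X` in both `L²(M)` and `L²(m)` (`exists_seq_trigLp_tendsto`). When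
`m(X) = 0`, closability forces `M(X) = lim ∫ |P_k|² dM = 0`; hence `M ≪ m`. For general `X`, passing
to the limit in the lower bound `γ ∫ |P_k|² dm ≤ ∫ |P_k|² dM` gives `γ m(X) ≤ M(X)`, so the
Radon–Nikodym derivative `w = dM/dm` satisfies `w ≥ γ` almost everywhere.
-/


open MeasureTheory Filter Finset ComplexConjugate
open scoped ComplexOrder

noncomputable section

instance : MeasurableSpace Circle := borel Circle
instance : BorelSpace Circle := ⟨rfl⟩

/-- The normalized Lebesgue (Haar) probability measure `m` on the unit circle `𝕋 = Circle`. -/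
def haarT : Measure Circle :=
  (ENNReal.ofReal (2 * Real.pi))⁻¹ •
    (volume.restrict (Set.Ioc 0 (2 * Real.pi))).map Circle.exp

/-- The two-sided (Laurent) quadratic form `𝐭[g,g] = Σ_{n,m ∈ ℤ} t_{n-m} g_m conj (g_n)` on the
set `𝖣` of finitely supported sequences `g : ℤ → ℂ`. -/
def laurentForm (t : ℤ → ℂ) (g : ℤ →₀ ℂ) : ℂ :=
  ∑ n ∈ g.support, ∑ m ∈ g.support, t (n - m) * g m * conj (g n)

/-- The `ℓ²(ℤ)` norm of a finitely supported two-sided sequence. -/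
def l2normZ (g : ℤ →₀ ℂ) : ℝ := Real.sqrt (∑ n ∈ g.support, ‖g n‖ ^ 2)

/-- A quadratic form `Q` on the finitely supported two-sided sequences is closable in `ℓ²(ℤ)`
if for every sequence `g⁽ᵏ⁾` in `𝖣` with `‖g⁽ᵏ⁾‖ → 0` and `Q[g⁽ᵏ⁾ - g⁽ˡ⁾] → 0` as `k, l → ∞`
one has `Q[g⁽ᵏ⁾] → 0`. -/
def FormClosableZ (Q : (ℤ →₀ ℂ) → ℂ) : Prop :=
  ∀ g : ℕ → (ℤ →₀ ℂ),
    Tendsto (fun k => l2normZ (g k)) atTop (nhds 0) →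
    Tendsto (fun p : ℕ × ℕ => Q (g p.1 - g p.2)) atTop (nhds 0) →
    Tendsto (fun k => Q (g k)) atTop (nhds 0)


/-! ### Trigonometric polynomials and the form as an `L²` norm -/

/-- The trigonometric polynomial `z ↦ Σ gₙ zⁿ` on the circle with coefficient sequence `g`. -/
def trigPoly (g : ℤ →₀ ℂ) (z : Circle) : ℂ := g.sum fun n a => a * (z : ℂ) ^ n

lemma continuous_circle_zpow (n : ℤ) : Continuous fun z : Circle => (z : ℂ) ^ n := by
  have h : (fun z : Circle => (z : ℂ) ^ n) = fun z : Circle => ((z ^ n : Circle) : ℂ) := by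
    funext z; simp
  rw [h]
  exact continuous_subtype_val.comp (continuous_zpow n)

lemma continuous_trigPoly (g : ℤ →₀ ℂ) : Continuous (trigPoly g) := by
  unfold trigPoly Finsupp.sum
  exact continuous_finsetSum _ fun n _ => continuous_const.mul (continuous_circle_zpow n)

lemma trigPoly_sub (g h : ℤ →₀ ℂ) : trigPoly (g - h) = trigPoly g - trigPoly h := by
  funext z
  exact Finsupp.sum_sub_index fun n a b => by ring

lemma integrable_of_continuous (μ : Measure Circle) [IsFiniteMeasure μ] {f : Circle → ℂ}
    (hf : Continuous f) : Integrable f μ :=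
  hf.integrable_of_hasCompactSupport (HasCompactSupport.of_compactSpace f)

lemma memLp_trigPoly (μ : Measure Circle) [IsFiniteMeasure μ] (g : ℤ →₀ ℂ) :
    MemLp (trigPoly g) 2 μ :=
  (continuous_trigPoly g).memLp_of_hasCompactSupport (HasCompactSupport.of_compactSpace _)

/-- The class of `trigPoly g` in `L²(μ)`. -/
def trigLp (μ : Measure Circle) [IsFiniteMeasure μ] (g : ℤ →₀ ℂ) : Lp ℂ 2 μ :=
  (memLp_trigPoly μ g).toLp _

lemma trigLp_sub (μ : Measure Circle) [IsFiniteMeasure μ] (g h : ℤ →₀ ℂ) :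
    trigLp μ (g - h) = trigLp μ g - trigLp μ h := by
  unfold trigLp
  rw [← MemLp.toLp_sub]
  simp only [trigPoly_sub]

lemma norm_toLp_sq (μ : Measure Circle) {f : Circle → ℂ} (hf : MemLp f 2 μ) :
    ‖hf.toLp f‖ ^ 2 = ∫ z, ‖f z‖ ^ 2 ∂μ := by
  have h := L2.inner_def (𝕜 := ℂ) (hf.toLp f) (hf.toLp f)
  rw [inner_self_eq_norm_sq_to_K] at h
  have h2 : ∫ a, inner ℂ ((hf.toLp f) a) ((hf.toLp f) a) ∂μ
      = ((∫ z, ‖f z‖ ^ 2 ∂μ : ℝ) : ℂ) := by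
    rw [← integral_complex_ofReal]
    refine integral_congr_ae ?_
    filter_upwards [hf.coeFn_toLp] with a ha
    rw [ha, inner_self_eq_norm_sq_to_K]
    simp
  rw [h2] at h
  refine Complex.ofReal_injective ?_
  rw [← h]
  simp

/-- If `t` is the moment sequence of `μ`, the form is `g ↦ ‖trigPoly g‖²` in `L²(μ)`. -/
lemma laurentForm_eq (μ : Measure Circle) [IsFiniteMeasure μ] (t : ℤ → ℂ)
    (hmom : ∀ n : ℤ, t n = ∫ z, (z : ℂ) ^ (-n) ∂μ) (g : ℤ →₀ ℂ) :
    laurentForm t g = ((‖trigLp μ g‖ ^ 2 : ℝ) : ℂ) := by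
  unfold trigLp
  rw [norm_toLp_sq, ← integral_complex_ofReal]
  have h : ∀ z : Circle, ((‖trigPoly g z‖ ^ 2 : ℝ) : ℂ) =
      ∑ n ∈ g.support, ∑ m ∈ g.support, (z : ℂ) ^ (-(n - m)) * g m * conj (g n) := by
    intro z
    have hz : (z : ℂ) ≠ 0 := z.coe_ne_zero
    have hc : conj (z : ℂ) = (z : ℂ)⁻¹ := by
      rw [← Circle.coe_inv_eq_conj, Circle.coe_inv]
    push_cast
    rw [← Complex.mul_conj']
    unfold trigPoly Finsupp.sum
    rw [map_sum, mul_comm, Finset.sum_mul_sum]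
    refine Finset.sum_congr rfl fun n _ => Finset.sum_congr rfl fun m _ => ?_
    rw [map_mul, map_zpow₀, hc, neg_sub, zpow_sub₀ hz, inv_zpow]
    ring
  have hi : ∀ n m : ℤ,
      Integrable (fun z : Circle => (z : ℂ) ^ (-(n - m)) * g m * conj (g n)) μ := fun n m =>
    integrable_of_continuous μ
      (((continuous_circle_zpow _).mul continuous_const).mul continuous_const)
  simp_rw [h]
  rw [integral_finsetSum _ fun n _ => integrable_finsetSum _ fun m _ => hi n m]
  unfold laurentForm
  refine Finset.sum_congr rfl fun n _ => ?_
  rw [integral_finsetSum _ fun m _ => hi n m]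
  refine Finset.sum_congr rfl fun m _ => ?_
  rw [integral_mul_const, integral_mul_const, hmom]

/-! ### Parseval's identity for Haar measure -/

instance : IsFiniteMeasure haarT := by
  refine ⟨?_⟩
  unfold haarT
  rw [Measure.smul_apply, smul_eq_mul]
  refine ENNReal.mul_lt_top ?_ (measure_lt_top _ _)
  simp [Real.pi_pos]

lemma integral_haarT_zpow (n : ℤ) :
    ∫ z, (z : ℂ) ^ n ∂haarT = if n = 0 then 1 else 0 := by
  have hp : (0 : ℝ) < 2 * Real.pi := by positivity
  unfold haarT
  rw [integral_smul_measure, integral_map Circle.exp.continuous.aemeasurable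
    (continuous_circle_zpow n).aestronglyMeasurable, ← intervalIntegral.integral_of_le hp.le]
  have h : ∀ x : ℝ, ((Circle.exp x : Circle) : ℂ) ^ n = Complex.exp ((n * Complex.I) * x) := by
    intro x
    rw [Circle.coe_exp, ← Complex.exp_int_mul]
    ring_nf
  simp_rw [h]
  split_ifs with hn
  · subst hn
    rw [ENNReal.toReal_inv, ENNReal.toReal_ofReal hp.le]
    have hpi : (Real.pi : ℂ) ≠ 0 := by exact_mod_cast Real.pi_ne_zero
    simp
    field_simp
  · have hc : (n : ℂ) * Complex.I ≠ 0 := mul_ne_zero (by exact_mod_cast hn) Complex.I_ne_zero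
    rw [integral_exp_mul_complex hc]
    have : Complex.exp (n * Complex.I * ((2 * Real.pi : ℝ) : ℂ)) = 1 := by
      rw [← Complex.exp_int_mul_two_pi_mul_I n]
      congr 1; push_cast; ring
    rw [this]
    simp

/-- Parseval's identity for trigonometric polynomials. -/
lemma l2normZ_eq (g : ℤ →₀ ℂ) : l2normZ g = ‖trigLp haarT g‖ := by
  have h := laurentForm_eq haarT (fun n => ∫ z, (z : ℂ) ^ (-n) ∂haarT) (fun _ => rfl) g
  have h2 : laurentForm (fun n => ∫ z, (z : ℂ) ^ (-n) ∂haarT) g =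
      ((∑ n ∈ g.support, ‖g n‖ ^ 2 : ℝ) : ℂ) := by
    unfold laurentForm
    push_cast
    refine Finset.sum_congr rfl fun n hn => ?_
    rw [Finset.sum_eq_single_of_mem n hn]
    · rw [integral_haarT_zpow]
      simp [Complex.mul_conj']
    · intro m _ hm
      rw [integral_haarT_zpow, if_neg (by omega)]
      simp
  rw [h2] at h
  have h3 : (∑ n ∈ g.support, ‖g n‖ ^ 2 : ℝ) = ‖trigLp haarT g‖ ^ 2 := by exact_mod_cast h
  unfold l2normZ
  rw [h3, Real.sqrt_sq (norm_nonneg _)]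

/-! ### Density of trigonometric polynomials -/

/-- Uniform approximation by trigonometric polynomials, transported from the Fourier monomials on
`AddCircle 1` along its homeomorphism with `Circle`. -/
lemma exists_trigPoly_near (f : C(Circle, ℂ)) {ε : ℝ} (hε : 0 < ε) :
    ∃ g : ℤ →₀ ℂ, ∀ z, ‖f z - trigPoly g z‖ ≤ ε := by
  have : Fact ((0 : ℝ) < 1) := ⟨one_pos⟩
  let e : AddCircle (1 : ℝ) ≃ₜ Circle := AddCircle.homeomorphCircle one_ne_zero
  let F : C(AddCircle (1 : ℝ), ℂ) := f.comp ⟨e, e.continuous⟩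
  have hF : F ∈ (Submodule.span ℂ (Set.range <| @fourier (1 : ℝ))).topologicalClosure := by
    rw [span_fourier_closure_eq_top]; trivial
  obtain ⟨q, hq, hd⟩ := Metric.mem_closure_iff.1 hF ε hε
  obtain ⟨c, hc⟩ := (Finsupp.mem_span_range_iff_exists_finsupp).1 hq
  refine ⟨c, fun z => ?_⟩
  have h1 : F (e.symm z) = f z := by
    change f (e (e.symm z)) = f z
    rw [e.apply_symm_apply]
  have h2 : q (e.symm z) = trigPoly c z := by
    have he : AddCircle.toCircle (e.symm z) = z := by
      rw [← AddCircle.homeomorphCircle_apply one_ne_zero]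
      exact e.apply_symm_apply z
    rw [← hc]
    unfold trigPoly Finsupp.sum
    rw [ContinuousMap.sum_apply]
    refine Finset.sum_congr rfl fun n _ => ?_
    rw [ContinuousMap.smul_apply, fourier_apply, AddCircle.toCircle_zsmul, he]
    simp
  rw [← h1, ← h2, ← dist_eq_norm]
  exact (ContinuousMap.dist_apply_le_dist _).trans hd.le

/-- Density of trigonometric polynomials in `L²(μ)` for an arbitrary finite Borel measure `μ`. -/
lemma exists_trigPoly_eLpNorm_le (μ : Measure Circle) [IsFiniteMeasure μ] {f : Circle → ℂ}
    (hf : MemLp f 2 μ) {ε : ENNReal} (hε : ε ≠ 0) :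
    ∃ g : ℤ →₀ ℂ, eLpNorm (trigPoly g - f) 2 μ ≤ ε := by
  have hε2 : ε / 2 ≠ 0 := by simp [hε]
  obtain ⟨φ, hφ, hφm⟩ := hf.exists_boundedContinuous_eLpNorm_sub_le (by simp) hε2
  -- a uniform error `δ` costs at most `δ * μ(𝕋) ^ (1/2)` in `L²(μ)`
  obtain ⟨δ, hδ, hδε⟩ : ∃ δ : ℝ, 0 < δ ∧
      μ Set.univ ^ (2 : ENNReal).toReal⁻¹ * ENNReal.ofReal δ ≤ ε / 2 := by
    set C := μ Set.univ ^ (2 : ENNReal).toReal⁻¹ with hC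
    have hCt : C ≠ ⊤ := ENNReal.rpow_ne_top_of_nonneg (by positivity) (measure_ne_top _ _)
    have hlim : Tendsto (fun δ : ℝ => C * ENNReal.ofReal δ) (nhdsWithin 0 (Set.Ioi 0))
        (nhds 0) := by
      have : Tendsto (fun δ : ℝ => C * ENNReal.ofReal δ) (nhds 0)
          (nhds (C * ENNReal.ofReal 0)) :=
        ENNReal.Tendsto.const_mul (ENNReal.continuous_ofReal.tendsto 0) (Or.inr hCt)
      simp only [ENNReal.ofReal_zero, mul_zero] at this
      exact this.mono_left nhdsWithin_le_nhds
    have hev := hlim.eventually (ge_mem_nhds (pos_iff_ne_zero.2 hε2))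
    obtain ⟨δ, h1, h2⟩ := (hev.and self_mem_nhdsWithin).exists
    exact ⟨δ, h2, h1⟩
  obtain ⟨g, hg⟩ := exists_trigPoly_near φ.toContinuousMap hδ
  refine ⟨g, ?_⟩
  have hb : eLpNorm (⇑φ - trigPoly g) 2 μ ≤ ε / 2 :=
    (eLpNorm_le_of_ae_bound (ae_of_all _ hg)).trans hδε
  calc eLpNorm (trigPoly g - f) 2 μ = eLpNorm (f - trigPoly g) 2 μ := eLpNorm_sub_comm _ _ _ _
    _ = eLpNorm ((f - ⇑φ) + (⇑φ - trigPoly g)) 2 μ := by rw [sub_add_sub_cancel]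
    _ ≤ eLpNorm (f - ⇑φ) 2 μ + eLpNorm (⇑φ - trigPoly g) 2 μ :=
      eLpNorm_add_le (hf.1.sub hφm.1) (hφm.1.sub (memLp_trigPoly μ g).1) (by norm_num)
    _ ≤ ε / 2 + ε / 2 := add_le_add hφ hb
    _ = ε := ENNReal.add_halves ε

lemma memLp_indicator_one (μ : Measure Circle) [IsFiniteMeasure μ] {X : Set Circle}
    (hX : MeasurableSet X) : MemLp (X.indicator fun _ => (1 : ℂ)) 2 μ :=
  memLp_indicator_const 2 hX 1 (Or.inr (measure_ne_top _ _))

lemma norm_indicator_sq (μ : Measure Circle) [IsFiniteMeasure μ] {X : Set Circle}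
    (hX : MeasurableSet X) : ‖(memLp_indicator_one μ hX).toLp _‖ ^ 2 = μ.real X := by
  rw [norm_toLp_sq]
  have : (fun z => ‖X.indicator (fun _ => (1 : ℂ)) z‖ ^ 2) = X.indicator fun _ => (1 : ℝ) := by
    funext z
    by_cases hz : z ∈ X <;> simp [hz]
  rw [this, integral_indicator hX]
  simp

/-- One sequence of trigonometric polynomials approximates `1_X` simultaneously in `L²(μ)` and
`L²(ν)`: approximate it in `L²(μ + ν)`. -/
lemma exists_seq_trigLp_tendsto (μ ν : Measure Circle) [IsFiniteMeasure μ] [IsFiniteMeasure ν]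
    {X : Set Circle} (hX : MeasurableSet X) :
    ∃ g : ℕ → ℤ →₀ ℂ,
      Tendsto (fun k => trigLp μ (g k)) atTop (nhds ((memLp_indicator_one μ hX).toLp _)) ∧
      Tendsto (fun k => trigLp ν (g k)) atTop (nhds ((memLp_indicator_one ν hX).toLp _)) := by
  have h : ∀ k : ℕ, ∃ g : ℤ →₀ ℂ,
      eLpNorm (trigPoly g - X.indicator fun _ => (1 : ℂ)) 2 (μ + ν) ≤ ((k : ENNReal))⁻¹ :=
    fun k => exists_trigPoly_eLpNorm_le (μ + ν) (memLp_indicator_one _ hX) (by simp)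
  choose g hg using h
  have key : ∀ (ρ : Measure Circle) [IsFiniteMeasure ρ], ρ ≤ μ + ν →
      Tendsto (fun k => trigLp ρ (g k)) atTop (nhds ((memLp_indicator_one ρ hX).toLp _)) := by
    intro ρ _ hρ
    refine (Lp.tendsto_Lp_iff_tendsto_eLpNorm'' (fun k => trigPoly (g k))
      (fun k => memLp_trigPoly ρ (g k)) _ (memLp_indicator_one ρ hX)).2 ?_
    exact tendsto_of_tendsto_of_tendsto_of_le_of_le tendsto_const_nhds
      ENNReal.tendsto_inv_nat_nhds_zero (fun _ => zero_le)
      fun k => (eLpNorm_mono_measure _ hρ).trans (hg k)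
  exact ⟨g, key μ (Measure.le_add_right le_rfl), key ν (Measure.le_add_left le_rfl)⟩

/-! ### Closability -/

/-- If `M ≪ m`, a sequence which is null in `L²(m)` and Cauchy in `L²(M)` is null in `L²(M)`,
since both limits are attained pointwise `M`-a.e. along a common subsequence. -/
lemma tendsto_zero_of_absolutelyContinuous (M : Measure Circle) [IsFiniteMeasure M]
    (hM : M ≪ haarT) (g : ℕ → ℤ →₀ ℂ)
    (h0 : Tendsto (fun k => ‖trigLp haarT (g k)‖) atTop (nhds 0))
    (hc : CauchySeq fun k => trigLp M (g k)) :
    Tendsto (fun k => ‖trigLp M (g k)‖) atTop (nhds 0) := by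
  obtain ⟨F, hF⟩ := cauchySeq_tendsto_of_complete hc
  have h0' : Tendsto (fun k => trigLp haarT (g k)) atTop (nhds 0) :=
    tendsto_zero_iff_norm_tendsto_zero.2 h0
  obtain ⟨φ, hφ, hφ0⟩ := (tendstoInMeasure_of_tendsto_Lp h0').exists_seq_tendsto_ae
  have hF' : Tendsto (fun k => trigLp M (g (φ k))) atTop (nhds F) := hF.comp hφ.tendsto_atTop
  obtain ⟨ψ, hψ, hψF⟩ := (tendstoInMeasure_of_tendsto_Lp hF').exists_seq_tendsto_ae
  have hm : ∀ᵐ z ∂haarT, ∀ k, trigLp haarT (g k) z = trigPoly (g k) z :=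
    ae_all_iff.2 fun k => (memLp_trigPoly haarT (g k)).coeFn_toLp
  have hMm : ∀ᵐ z ∂M, ∀ k, trigLp M (g k) z = trigPoly (g k) z :=
    ae_all_iff.2 fun k => (memLp_trigPoly M (g k)).coeFn_toLp
  have hFz : F = 0 := by
    refine Lp.ext ?_
    filter_upwards [hM.ae_le hm, hMm, hψF, hM.ae_le hφ0, Lp.coeFn_zero ℂ 2 M,
      hM.ae_le (Lp.coeFn_zero ℂ 2 haarT)] with z h1 h2 h3 h4 h5 h6
    rw [h5]
    rw [h6] at h4
    simp only [h2] at h3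
    simp only [h1] at h4
    exact tendsto_nhds_unique h3 (h4.comp hψ.tendsto_atTop)
  rw [hFz] at hF
  exact tendsto_zero_iff_norm_tendsto_zero.1 hF

lemma tendsto_ofReal_sq_zero_iff {ι : Type*} {l : Filter ι} {f : ι → ℝ} :
    Tendsto (fun i => ((f i ^ 2 : ℝ) : ℂ)) l (nhds 0) ↔ Tendsto f l (nhds 0) := by
  rw [tendsto_zero_iff_norm_tendsto_zero, tendsto_zero_iff_norm_tendsto_zero (f := f)]
  have : ∀ i, ‖((f i ^ 2 : ℝ) : ℂ)‖ = ‖f i‖ ^ 2 := fun i => by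
    rw [Complex.norm_real, norm_pow]
  simp_rw [this]
  constructor
  · intro h
    have := (Real.continuous_sqrt.tendsto 0).comp h
    simpa [Function.comp_def, Real.sqrt_sq_eq_abs] using this
  · intro h
    simpa using h.pow 2

/-- Closability of the form in terms of `L²` convergence of trigonometric polynomials. -/
lemma formClosableZ_iff (t : ℤ → ℂ) (M : Measure Circle) [IsFiniteMeasure M]
    (hmom : ∀ n : ℤ, t n = ∫ z, (z : ℂ) ^ (-n) ∂M) :
    FormClosableZ (laurentForm t) ↔ ∀ g : ℕ → ℤ →₀ ℂ,
      Tendsto (fun k => ‖trigLp haarT (g k)‖) atTop (nhds 0) →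
      CauchySeq (fun k => trigLp M (g k)) →
      Tendsto (fun k => ‖trigLp M (g k)‖) atTop (nhds 0) := by
  unfold FormClosableZ
  simp_rw [laurentForm_eq M t hmom, l2normZ_eq, tendsto_ofReal_sq_zero_iff,
    cauchySeq_iff_tendsto_dist_atTop_0, dist_eq_norm, trigLp_sub]

/-- The two-sided (Laurent) form `𝐭[g,g]` is closable in `ℓ²(ℤ)` if and only if its representing
measure `M` has the form `dM = w dm` with `w ∈ L¹(𝕋, m)`, `w ≥ γ` a.e. -/
theorem laurentForm_closable_iff (γ : ℝ) (hγ : 0 < γ) (t : ℤ → ℂ)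
    (hsym : ∀ n : ℤ, t (-n) = conj (t n))
    (hlb : ∀ g : ℤ →₀ ℂ, ((γ * l2normZ g ^ 2 : ℝ) : ℂ) ≤ laurentForm t g)
    (M : Measure Circle) [IsFiniteMeasure M]
    (hmom : ∀ n : ℤ, t n = ∫ z, (z : ℂ) ^ (-n) ∂M) :
    FormClosableZ (laurentForm t) ↔
      ∃ w : Circle → ℝ, Integrable w haarT ∧ (∀ᵐ z ∂haarT, γ ≤ w z) ∧
        ∀ X : Set Circle, MeasurableSet X →
          M X = ∫⁻ z in X, ENNReal.ofReal (w z) ∂haarT := by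
  rw [formClosableZ_iff t M hmom]
  constructor
  · intro hcl
    have hac : M ≪ haarT := by
      refine Measure.AbsolutelyContinuous.mk fun X hX hX0 => ?_
      obtain ⟨g, hgM, hgm⟩ := exists_seq_trigLp_tendsto M haarT hX
      have h0 := norm_indicator_sq haarT hX
      rw [measureReal_def, hX0, ENNReal.toReal_zero, sq_eq_zero_iff] at h0
      have hgm' := hgm.norm
      rw [h0] at hgm'
      have hz := tendsto_nhds_unique hgM.norm (hcl g hgm' hgM.cauchySeq)
      have h1 := norm_indicator_sq M hX
      rw [hz] at h1
      refine (measureReal_eq_zero_iff (measure_ne_top _ _)).1 ?_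
      rw [← h1]; norm_num
    have hle : ∀ X : Set Circle, MeasurableSet X → ENNReal.ofReal γ * haarT X ≤ M X := by
      intro X hX
      obtain ⟨g, hgM, hgm⟩ := exists_seq_trigLp_tendsto M haarT hX
      have hineq : γ * haarT.real X ≤ M.real X := by
        rw [← norm_indicator_sq haarT hX, ← norm_indicator_sq M hX]
        refine le_of_tendsto_of_tendsto' ((hgm.norm.pow 2).const_mul γ) (hgM.norm.pow 2)
          fun k => ?_
        have := hlb (g k)
        rw [laurentForm_eq M t hmom, l2normZ_eq] at this
        exact_mod_cast this
      have := ENNReal.ofReal_le_ofReal hineq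
      rwa [ENNReal.ofReal_mul hγ.le, ofReal_measureReal, ofReal_measureReal] at this
    refine ⟨fun z => (M.rnDeriv haarT z).toReal, Measure.integrable_toReal_rnDeriv, ?_, ?_⟩
    · have hae : (fun _ => ENNReal.ofReal γ) ≤ᵐ[haarT] M.rnDeriv haarT := by
        refine ae_le_of_forall_setLIntegral_le_of_sigmaFinite measurable_const fun X hX _ => ?_
        rw [setLIntegral_const, Measure.setLIntegral_rnDeriv hac]
        exact hle X hX
      filter_upwards [hae, Measure.rnDeriv_lt_top M haarT] with z hz hlt
      exact (ENNReal.ofReal_le_iff_le_toReal hlt.ne).1 hz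
    · intro X hX
      rw [← Measure.setLIntegral_rnDeriv hac X]
      refine lintegral_congr_ae (ae_restrict_of_ae ?_)
      filter_upwards [Measure.rnDeriv_lt_top M haarT] with z hz
      exact (ENNReal.ofReal_toReal hz.ne).symm
  · rintro ⟨w, -, -, hM⟩ g h0 hc
    refine tendsto_zero_of_absolutelyContinuous M ?_ g h0 hc
    refine Measure.AbsolutelyContinuous.mk fun X hX hX0 => ?_
    rw [hM X hX, Measure.restrict_eq_zero.2 hX0, lintegral_zero_measure]
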